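/- For all integers n ≥ 2 and k ≥ 1, ||R_{k,n} − C_{k,n}|| = (1/k^n)·( k^n − k^{n+1}/n + (n+1)·Σ_{s=1}^{k−1} s^n − k·(n−1)·Σ_{s=1}^{k−1} s^{n−1} ). -/

import Mathlib

/-- Number of descents of a permutation of `{1,...,n}` (here `Fin n`, 0-indexed):
the number of positions `i` with `1 ≤ i ≤ n-1` and `π(i) > π(i+1)`. -/
def numDescents (n : ℕ) (π : Equiv.Perm (Fin n)) : ℕ :=
  ((Finset.range (n - 1)).filter (fun i =>
    ∃ h : i + 1 < n, π ⟨i + 1, h⟩ < π ⟨i, Nat.lt_of_succ_lt h⟩)).card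

/-- `π` has a cyclic descent at `n` if `π(n) > π(1)`. -/
def hasCyclicDescentAtLast (n : ℕ) (π : Equiv.Perm (Fin n)) : Prop :=
  ∃ h : 0 < n, π ⟨0, h⟩ < π ⟨n - 1, Nat.sub_lt h Nat.one_pos⟩

instance (n : ℕ) (π : Equiv.Perm (Fin n)) : Decidable (hasCyclicDescentAtLast n π) :=
  exists_prop_decidable _

/-- Number of cyclic descents: `d(π)+1` if `π` has a cyclic descent at `n`, else `d(π)`. -/
def numCyclicDescents (n : ℕ) (π : Equiv.Perm (Fin n)) : ℕ :=
  numDescents n π + if hasCyclicDescentAtLast n π then 1 else 0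

/-- The k-riffle shuffle measure `R_{k,n}(π) = binom(n+k-d(π)-1, n) / k^n`. -/
noncomputable def riffle (k n : ℕ) (π : Equiv.Perm (Fin n)) : ℝ :=
  (Nat.choose (n + k - numDescents n π - 1) n : ℝ) / (k : ℝ) ^ n

/-- The cut-then-k-riffle-shuffle measure
`C_{k,n}(π) = binom(n+k-cd(π)-1, n-1) / (n·k^(n-1))`. -/
noncomputable def cutRiffle (k n : ℕ) (π : Equiv.Perm (Fin n)) : ℝ :=
  (Nat.choose (n + k - numCyclicDescents n π - 1) (n - 1) : ℝ) / ((n : ℝ) * (k : ℝ) ^ (n - 1))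

/-!
Rotating the positions of a permutation of `{1, …, n}` permutes its cyclic descents cyclically, and
each rotation class contains exactly one permutation that starts with its minimum, i.e. comes from
some `σ ∈ S_{n-1}`. All members of that class have `d(σ) + 1` cyclic descents, and exactly
`d(σ) + 1` of them have a cyclic descent at `n`. Since the sign of `R - C` is decided by whether
there is a cyclic descent at `n`, the distance becomes a sum over `S_{n-1}` of
`(d + 1) (n - 1 - d) binom(n + k - d - 2, n - 1)`.

The same reduction proves the Worpitzky identity `∑ σ, binom(n + k - d(σ) - 1, n) = k ^ n` by
induction on `n`. Summing it over `k` raises the lower index of the binomial coefficient, which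
amounts to multiplying the summand by a linear polynomial in `d`; doing so once and twice gives the
first two moments of `d + 1`, and hence the sum above.
-/

open Equiv Finset

section Choose

variable {R : Type*} [CommRing R]

theorem cast_choose_succ_mul (n r : ℕ) :
    (n.choose (r + 1) : R) * (r + 1) = n.choose r * (n - r) := by
  rcases le_or_gt r n with hr | hr
  · have h := congrArg (Nat.cast : ℕ → R) (n.choose_succ_right_eq r)
    simpa only [Nat.cast_mul, Nat.cast_add, Nat.cast_one, Nat.cast_sub hr] using h
  · simp [Nat.choose_eq_zero_of_lt hr, Nat.choose_eq_zero_of_lt (hr.trans r.lt_succ_self)]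

theorem cast_succ_choose_succ_mul (n r : ℕ) :
    ((n + 1).choose (r + 1) : R) * (r + 1) = n.choose r * (n + 1) := by
  have h := congrArg (Nat.cast : ℕ → R) (n.add_one_mul_choose_eq r)
  push_cast at h
  linear_combination -h

theorem cast_succ_choose_add_two_mul (n r : ℕ) :
    ((n + 1).choose (r + 2) : R) * ((r + 1) * (r + 2)) = n.choose r * ((n + 1) * (n - r)) := by
  have h₁ := cast_succ_choose_succ_mul (R := R) n (r + 1)
  have h₂ := cast_choose_succ_mul (R := R) n r
  push_cast at h₁
  linear_combination (r + 1 : R) * h₁ + (n + 1 : R) * h₂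

theorem sum_range_choose_add {a r : ℕ} (h : a ≤ r) (k : ℕ) :
    ∑ s ∈ range k, (a + s).choose r = (a + k).choose (r + 1) := by
  induction k with
  | zero => simp [Nat.choose_eq_zero_of_lt (Nat.lt_succ_of_le h)]
  | succ k ih => rw [sum_range_succ, ih, ← add_assoc, Nat.choose_succ_succ, add_comm]

-- The inductive step of the Worpitzky identity for a permutation with `d` descents and `j` ascents,
-- in a form without truncated subtraction.
theorem succ_mul_choose_add_succ_mul_choose (d j k : ℕ) :
    (d + 1) * (j + k + 1).choose (d + j + 2) + (j + 1) * (j + k).choose (d + j + 2)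
      = k * (j + k).choose (d + j + 1) := by
  have h₁ := cast_succ_choose_succ_mul (R := ℤ) (j + k) (d + j + 1)
  have h₂ := cast_choose_succ_mul (R := ℤ) (j + k) (d + j + 1)
  zify
  refine mul_right_cancel₀ (b := (d + j + 2 : ℤ)) (by positivity) ?_
  push_cast at h₁ h₂
  linear_combination (d + 1 : ℤ) * h₁ + (j + 1 : ℤ) * h₂

end Choose

section PowerSums

variable {R : Type*} [CommRing R]

theorem sum_range_succ_sum_range_pow (p k : ℕ) :
    ∑ t ∈ range (k + 1), ∑ s ∈ range t, (s : R) ^ p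
      = k * ∑ s ∈ range k, (s : R) ^ p - ∑ s ∈ range k, (s : R) ^ (p + 1) := by
  induction k with
  | zero => simp
  | succ k ih =>
    rw [sum_range_succ, ih, sum_range_succ, sum_range_succ]
    push_cast
    ring

theorem sum_Icc_one_pred_pow {S : Type*} [Semiring S] {p : ℕ} (hp : p ≠ 0) (k : ℕ) :
    ∑ s ∈ Icc 1 (k - 1), (s : S) ^ p = ∑ s ∈ range k, (s : S) ^ p := by
  refine sum_subset (fun s hs => ?_) fun s hs hs' => ?_
  · simp only [mem_Icc, mem_range] at *
    omega
  · obtain rfl : s = 0 := by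
      simp only [mem_Icc, mem_range] at *
      omega
    simp [hp]

end PowerSums

section CyclicDescents

variable {m : ℕ}

/-- The cyclic descents of `π`, as positions in `Fin (m + 1)`; the successor of a position is taken
modulo `m + 1`, so that `Fin.last m` stands for a cyclic descent at the end. -/
def cyclicDescents (π : Perm (Fin (m + 1))) : Finset (Fin (m + 1)) :=
  {i | π (i + 1) < π i}

theorem mem_cyclicDescents {π : Perm (Fin (m + 1))} {i : Fin (m + 1)} :
    i ∈ cyclicDescents π ↔ π (i + 1) < π i := by
  simp [cyclicDescents]

theorem hasCyclicDescentAtLast_iff (π : Perm (Fin (m + 1))) :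
    hasCyclicDescentAtLast (m + 1) π ↔ π 0 < π (Fin.last m) :=
  ⟨fun ⟨_, h⟩ => h, fun h => ⟨m.succ_pos, h⟩⟩

theorem last_mem_cyclicDescents {π : Perm (Fin (m + 1))} :
    Fin.last m ∈ cyclicDescents π ↔ hasCyclicDescentAtLast (m + 1) π := by
  rw [mem_cyclicDescents, Fin.last_add_one, hasCyclicDescentAtLast_iff]

theorem numDescents_eq_sum (π : Perm (Fin (m + 1))) :
    numDescents (m + 1) π = ∑ i : Fin m, if π i.succ < π i.castSucc then 1 else 0 := by
  rw [numDescents, card_filter, Nat.add_sub_cancel, sum_range]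
  refine sum_congr rfl fun i _ => if_congr ?_ rfl rfl
  exact ⟨fun ⟨_, h⟩ => h, fun h => ⟨Nat.succ_lt_succ i.isLt, h⟩⟩

theorem numDescents_le (π : Perm (Fin (m + 1))) : numDescents (m + 1) π ≤ m :=
  (card_filter_le _ _).trans (card_range m).le

theorem card_cyclicDescents (π : Perm (Fin (m + 1))) :
    #(cyclicDescents π) = numCyclicDescents (m + 1) π := by
  simp only [cyclicDescents, card_filter, Fin.sum_univ_castSucc, Fin.coeSucc_eq_succ,
    Fin.last_add_one, numCyclicDescents, numDescents_eq_sum, hasCyclicDescentAtLast_iff]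

theorem numCyclicDescents_le (π : Perm (Fin (m + 1))) : numCyclicDescents (m + 1) π ≤ m + 1 := by
  simpa only [card_cyclicDescents, Fintype.card_fin] using card_le_univ (cyclicDescents π)

theorem mem_cyclicDescents_mul_addRight {π : Perm (Fin (m + 1))} {p i : Fin (m + 1)} :
    i ∈ cyclicDescents (π * Equiv.addRight p) ↔ i + p ∈ cyclicDescents π := by
  simp [mem_cyclicDescents, add_right_comm]

theorem numCyclicDescents_mul_addRight (π : Perm (Fin (m + 1))) (p : Fin (m + 1)) :
    numCyclicDescents (m + 1) (π * Equiv.addRight p) = numCyclicDescents (m + 1) π := by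
  rw [← card_cyclicDescents, ← card_cyclicDescents]
  exact card_equiv (Equiv.addRight p) fun _ => mem_cyclicDescents_mul_addRight

theorem sum_mul_addRight_ite {M : Type*} [AddCommMonoid M] (π : Perm (Fin (m + 1)))
    (f g : ℕ → M) :
    (∑ p, if hasCyclicDescentAtLast (m + 1) (π * Equiv.addRight p)
        then f (numCyclicDescents (m + 1) (π * Equiv.addRight p))
        else g (numCyclicDescents (m + 1) (π * Equiv.addRight p)))
      = numCyclicDescents (m + 1) π • f (numCyclicDescents (m + 1) π)
        + (m + 1 - numCyclicDescents (m + 1) π) • g (numCyclicDescents (m + 1) π) := by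
  simp only [numCyclicDescents_mul_addRight, ← last_mem_cyclicDescents,
    mem_cyclicDescents_mul_addRight]
  set c := numCyclicDescents (m + 1) π
  calc ∑ p, (if Fin.last m + p ∈ cyclicDescents π then f c else g c)
      = ∑ i, if i ∈ cyclicDescents π then f c else g c :=
        Equiv.sum_comp (Equiv.addLeft (Fin.last m)) fun i =>
          if i ∈ cyclicDescents π then f c else g c
    _ = c • f c + (m + 1 - c) • g c := by
        rw [sum_ite, sum_const, sum_const, filter_univ_mem, filter_not, filter_univ_mem,
          ← compl_eq_univ_sdiff, card_compl, card_cyclicDescents, Fintype.card_fin]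

/-- The permutation of `Fin (m + 1)` whose one-line notation is `0` followed by that of `σ`, with
every value of `σ` increased by one. It is the representative of its class under rotation of
positions. -/
def consZero (σ : Perm (Fin m)) : Perm (Fin (m + 1)) :=
  Perm.decomposeFin.symm (0, σ)

theorem consZero_zero (σ : Perm (Fin m)) : consZero σ 0 = 0 :=
  Perm.decomposeFin_symm_apply_zero 0 σ

theorem consZero_succ (σ : Perm (Fin m)) (i : Fin m) : consZero σ i.succ = (σ i).succ := by
  simp [consZero]

theorem consZero_injective : Function.Injective (consZero : Perm (Fin m) → _) :=
  Perm.decomposeFin.symm.injective.comp (Prod.mk_right_injective 0)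

theorem numDescents_consZero (σ : Perm (Fin (m + 1))) :
    numDescents (m + 2) (consZero σ) = numDescents (m + 1) σ := by
  simp only [numDescents_eq_sum, Fin.sum_univ_succ (n := m), Fin.castSucc_zero, consZero_zero,
    Fin.not_lt_zero, if_false, zero_add, ← Fin.succ_castSucc, consZero_succ, Fin.succ_lt_succ_iff]

theorem hasCyclicDescentAtLast_consZero (σ : Perm (Fin (m + 1))) :
    hasCyclicDescentAtLast (m + 2) (consZero σ) := by
  rw [hasCyclicDescentAtLast_iff, ← Fin.succ_last, consZero_zero, consZero_succ]
  exact Fin.succ_pos _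

theorem numCyclicDescents_consZero (σ : Perm (Fin (m + 1))) :
    numCyclicDescents (m + 2) (consZero σ) = numDescents (m + 1) σ + 1 := by
  rw [numCyclicDescents, if_pos (hasCyclicDescentAtLast_consZero σ), numDescents_consZero]

theorem bijective_consZero_mul_addRight :
    Function.Bijective fun x : Perm (Fin m) × Fin (m + 1) =>
      consZero x.1 * Equiv.addRight x.2 := by
  refine (Fintype.bijective_iff_injective_and_card _).2 ⟨?_, ?_⟩
  · rintro ⟨σ, p⟩ ⟨τ, q⟩ (h : consZero σ * Equiv.addRight p = consZero τ * Equiv.addRight q)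
    -- Both sides take the value `0` at `-p`, the right-hand side only at `-q`.
    have hpq : consZero τ (-p + q) = consZero τ 0 := by
      simpa [consZero_zero] using (congrArg (fun π : Perm _ => π (-p)) h).symm
    obtain rfl : p = q := neg_add_eq_zero.1 ((consZero τ).injective hpq)
    rw [consZero_injective (mul_right_cancel h)]
  · simp [Fintype.card_perm, Nat.factorial_succ, mul_comm]

theorem sum_perm_ite_hasCyclicDescentAtLast {M : Type*} [AddCommMonoid M] (f g : ℕ → M) :
    (∑ π, if hasCyclicDescentAtLast (m + 2) π
        then f (numCyclicDescents (m + 2) π) else g (numCyclicDescents (m + 2) π))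
      = ∑ σ, ((numDescents (m + 1) σ + 1) • f (numDescents (m + 1) σ + 1)
          + (m + 1 - numDescents (m + 1) σ) • g (numDescents (m + 1) σ + 1)) := by
  rw [← bijective_consZero_mul_addRight.sum_comp, Fintype.sum_prod_type]
  simp only [sum_mul_addRight_ite, numCyclicDescents_consZero, Nat.add_sub_add_right]

end CyclicDescents

section Worpitzky

theorem sum_choose_numDescents (m k : ℕ) :
    ∑ σ, (m + k - numDescents (m + 1) σ).choose (m + 1) = k ^ (m + 1) := by
  induction m with
  | zero => simp [numDescents]
  | succ m ih =>
    have hd (π : Perm (Fin (m + 2))) : (m + 1 + k - numDescents (m + 2) π).choose (m + 2) =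
        if hasCyclicDescentAtLast (m + 2) π
        then (m + 1 + k - (numCyclicDescents (m + 2) π - 1)).choose (m + 2)
        else (m + 1 + k - numCyclicDescents (m + 2) π).choose (m + 2) := by
      unfold numCyclicDescents
      split_ifs <;> simp
    rw [sum_congr rfl fun π _ => hd π, sum_perm_ite_hasCyclicDescentAtLast
      (fun c => (m + 1 + k - (c - 1)).choose (m + 2)) fun c => (m + 1 + k - c).choose (m + 2),
      pow_succ', ← ih, mul_sum]
    refine sum_congr rfl fun σ _ => ?_
    obtain ⟨j, hj⟩ := Nat.exists_eq_add_of_le (numDescents_le σ)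
    generalize numDescents (m + 1) σ = d at *
    subst hj
    have h₁ : d + j + 1 + k - (d + 1 - 1) = j + k + 1 := by omega
    have h₂ : d + j + 1 + k - (d + 1) = j + k := by omega
    have h₃ : d + j + 1 - d = j + 1 := by omega
    have h₄ : d + j + k - d = j + k := by omega
    simpa only [h₁, h₂, h₃, h₄, smul_eq_mul] using succ_mul_choose_add_succ_mul_choose d j k

theorem sum_choose_numDescents_add_two (m k : ℕ) :
    ∑ σ, (m + k - numDescents (m + 1) σ).choose (m + 2) = ∑ s ∈ range k, s ^ (m + 1) := by
  simp only [← sum_choose_numDescents]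
  rw [sum_comm]
  refine sum_congr rfl fun σ _ => ?_
  simp only [Nat.sub_add_comm (numDescents_le σ)]
  exact (sum_range_choose_add (by omega) k).symm

theorem sum_choose_numDescents_add_three (m k : ℕ) :
    ∑ σ, (m + k - numDescents (m + 1) σ).choose (m + 3)
      = ∑ t ∈ range k, ∑ s ∈ range t, s ^ (m + 1) := by
  simp only [← sum_choose_numDescents_add_two]
  rw [sum_comm]
  refine sum_congr rfl fun σ _ => ?_
  simp only [Nat.sub_add_comm (numDescents_le σ)]
  exact (sum_range_choose_add (by omega) k).symm

theorem cast_add_sub_numDescents {R : Type*} [AddCommGroupWithOne R] {m : ℕ} (k : ℕ)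
    (σ : Perm (Fin (m + 1))) :
    ((m + k - numDescents (m + 1) σ : ℕ) : R) = m + k - numDescents (m + 1) σ := by
  rw [Nat.cast_sub ((numDescents_le σ).trans (Nat.le_add_right m k)), Nat.cast_add]

variable {R : Type*} [CommRing R]

theorem sum_succ_numDescents_mul_choose (m k : ℕ) :
    ∑ σ, (numDescents (m + 1) σ + 1 : R) * (m + k - numDescents (m + 1) σ).choose (m + 1)
      = k ^ (m + 2) - (m + 2) * ∑ s ∈ range k, (s : R) ^ (m + 1) := by
  have hσ (σ : Perm (Fin (m + 1))) :
      (numDescents (m + 1) σ + 1 : R) * (m + k - numDescents (m + 1) σ).choose (m + 1)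
        = k * (m + k - numDescents (m + 1) σ).choose (m + 1)
          - (m + 2) * (m + k - numDescents (m + 1) σ).choose (m + 2) := by
    have h := cast_choose_succ_mul (R := R) (m + k - numDescents (m + 1) σ) (m + 1)
    rw [cast_add_sub_numDescents] at h
    push_cast at h
    linear_combination h
  simp only [hσ, sum_sub_distrib, ← mul_sum]
  have h₀ := congrArg (Nat.cast : ℕ → R) (sum_choose_numDescents m k)
  have h₁ := congrArg (Nat.cast : ℕ → R) (sum_choose_numDescents_add_two m k)
  push_cast at h₀ h₁
  rw [h₀, h₁, ← pow_succ']

theorem sum_succ_numDescents_mul_sub_mul_choose (m k : ℕ) :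
    ∑ σ, (numDescents (m + 1) σ + 1 : R) * (m + 1 - numDescents (m + 1) σ)
        * (m + k - numDescents (m + 1) σ).choose (m + 1)
      = (m + 2) * k ^ (m + 2) - k ^ (m + 3)
        + (m + 2) * (m + 3) * ∑ s ∈ range k, (s : R) ^ (m + 2)
        - (m + 1) * (m + 2) * k * ∑ s ∈ range k, (s : R) ^ (m + 1) := by
  have hσ (σ : Perm (Fin (m + 1))) :
      (numDescents (m + 1) σ + 1 : R) * (m + 1 - numDescents (m + 1) σ)
          * (m + k - numDescents (m + 1) σ).choose (m + 1)
        = k * (m + 2 + k) * (m + k - numDescents (m + 1) σ).choose (m + 1)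
          - 2 * k * ((numDescents (m + 1) σ + 1)
            * (m + k - numDescents (m + 1) σ).choose (m + 1))
          - (m + 2) * (m + 3) * (m + (k + 1) - numDescents (m + 1) σ).choose (m + 3) := by
    have h := cast_succ_choose_add_two_mul (R := R) (m + k - numDescents (m + 1) σ) (m + 1)
    rw [cast_add_sub_numDescents,
      ← Nat.sub_add_comm ((numDescents_le σ).trans (Nat.le_add_right m k)), add_assoc m k 1] at h
    push_cast at h
    linear_combination h
  simp only [hσ, sum_sub_distrib, ← mul_sum, sum_succ_numDescents_mul_choose]
  have h₀ := congrArg (Nat.cast : ℕ → R) (sum_choose_numDescents m k)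
  have h₂ := congrArg (Nat.cast : ℕ → R) (sum_choose_numDescents_add_three m (k + 1))
  push_cast at h₀ h₂
  rw [h₀, h₂, sum_range_succ_sum_range_pow]
  ring

end Worpitzky

section TotalVariation

variable {m k : ℕ} {π : Perm (Fin (m + 1))}

theorem riffle_sub_cutRiffle_of_hasCyclicDescentAtLast (hk : k ≠ 0)
    (hπ : hasCyclicDescentAtLast (m + 1) π) :
    riffle k (m + 1) π - cutRiffle k (m + 1) π
      = (m + 1 - numCyclicDescents (m + 1) π) * (m + k - numCyclicDescents (m + 1) π).choose m
        / ((m + 1) * k ^ (m + 1)) := by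
  have hd := numDescents_le π
  simp only [riffle, cutRiffle, numCyclicDescents, if_pos hπ]
  generalize numDescents (m + 1) π = d at *
  obtain ⟨N, hN⟩ : ∃ N, m + k = N + d + 1 := ⟨m + k - d - 1, by omega⟩
  have h₁ : m + 1 + k - d - 1 = N + 1 := by omega
  have h₂ : m + 1 + k - (d + 1) - 1 = N := by omega
  have h₃ : m + k - (d + 1) = N := by omega
  have hNR : (m + k : ℝ) = N + d + 1 := mod_cast hN
  rw [h₁, h₂, h₃, Nat.add_sub_cancel]
  push_cast
  field_simp
  linear_combination k ^ m * cast_succ_choose_succ_mul (R := ℝ) N m - k ^ m * N.choose m * hNR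

theorem riffle_sub_cutRiffle_of_not_hasCyclicDescentAtLast (hk : k ≠ 0)
    (hπ : ¬ hasCyclicDescentAtLast (m + 1) π) :
    riffle k (m + 1) π - cutRiffle k (m + 1) π
      = -(numCyclicDescents (m + 1) π * (m + k - numCyclicDescents (m + 1) π).choose m
        / ((m + 1) * k ^ (m + 1))) := by
  have hN := cast_add_sub_numDescents (R := ℝ) k π
  simp only [riffle, cutRiffle, numCyclicDescents, if_neg hπ, add_zero]
  have h₁ : m + 1 + k - numDescents (m + 1) π - 1 = m + k - numDescents (m + 1) π := by omega
  rw [h₁, Nat.add_sub_cancel]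
  generalize m + k - numDescents (m + 1) π = N at *
  push_cast
  field_simp
  linear_combination k ^ m * cast_choose_succ_mul (R := ℝ) N m + k ^ m * N.choose m * hN

theorem abs_riffle_sub_cutRiffle (hk : k ≠ 0) (π : Perm (Fin (m + 1))) :
    |riffle k (m + 1) π - cutRiffle k (m + 1) π|
      = if hasCyclicDescentAtLast (m + 1) π
        then (m + 1 - numCyclicDescents (m + 1) π : ℝ)
          * (m + k - numCyclicDescents (m + 1) π).choose m / ((m + 1) * k ^ (m + 1))
        else (numCyclicDescents (m + 1) π : ℝ)
          * (m + k - numCyclicDescents (m + 1) π).choose m / ((m + 1) * k ^ (m + 1)) := by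
  have hc : (0 : ℝ) ≤ m + 1 - numCyclicDescents (m + 1) π :=
    sub_nonneg.2 (mod_cast numCyclicDescents_le π)
  split_ifs with hπ
  · rw [riffle_sub_cutRiffle_of_hasCyclicDescentAtLast hk hπ, abs_of_nonneg (by positivity)]
  · rw [riffle_sub_cutRiffle_of_not_hasCyclicDescentAtLast hk hπ, abs_neg,
      abs_of_nonneg (by positivity)]

theorem sum_abs_riffle_sub_cutRiffle (m : ℕ) (hk : k ≠ 0) :
    ∑ π, |riffle k (m + 2) π - cutRiffle k (m + 2) π|
      = 2 / ((m + 2) * k ^ (m + 2)) *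
        ∑ σ, (numDescents (m + 1) σ + 1 : ℝ) * (m + 1 - numDescents (m + 1) σ)
          * (m + k - numDescents (m + 1) σ).choose (m + 1) := by
  simp only [abs_riffle_sub_cutRiffle hk]
  rw [sum_perm_ite_hasCyclicDescentAtLast
    (fun c => ((m + 1 : ℕ) + 1 - c : ℝ) * (m + 1 + k - c).choose (m + 1)
      / (((m + 1 : ℕ) + 1) * k ^ (m + 2)))
    fun c => (c : ℝ) * (m + 1 + k - c).choose (m + 1) / (((m + 1 : ℕ) + 1) * k ^ (m + 2)), mul_sum]
  refine sum_congr rfl fun σ _ => ?_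
  have h : m + 1 + k - (numDescents (m + 1) σ + 1) = m + k - numDescents (m + 1) σ := by omega
  rw [h, nsmul_eq_mul, nsmul_eq_mul, Nat.cast_sub ((numDescents_le σ).trans m.le_succ)]
  push_cast
  ring

end TotalVariation

/-- total variation distance between `R_{k,n}` and `C_{k,n}`, second form. -/
theorem totalVariation_riffle_cutRiffle_eq_powerSums (n k : ℕ) (hn : 2 ≤ n) (hk : 1 ≤ k) :
    (1 / 2) * ∑ π : Equiv.Perm (Fin n), |riffle k n π - cutRiffle k n π|
      = (1 / (k : ℝ) ^ n) *
          ((k : ℝ) ^ n - (k : ℝ) ^ (n + 1) / (n : ℝ)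
            + ((n : ℝ) + 1) * ∑ s ∈ Finset.Icc 1 (k - 1), (s : ℝ) ^ n
            - (k : ℝ) * ((n : ℝ) - 1) * ∑ s ∈ Finset.Icc 1 (k - 1), (s : ℝ) ^ (n - 1)) := by
  obtain ⟨m, rfl⟩ := Nat.exists_eq_add_of_le' hn
  have hk₀ : k ≠ 0 := Nat.one_le_iff_ne_zero.1 hk
  have hm : m + 2 - 1 = m + 1 := rfl
  rw [sum_abs_riffle_sub_cutRiffle m hk₀, sum_succ_numDescents_mul_sub_mul_choose, hm,
    sum_Icc_one_pred_pow (m + 1).succ_ne_zero, sum_Icc_one_pred_pow m.succ_ne_zero]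
  push_cast
  field_simp
  ring
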